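/- arXiv:2301.10696 — 7 statements merged into one kernel-verified Lean document; each statement's English description precedes it below -/
import Mathlib

section
/- Set-theoretic and type-theoretic ordinals coincide: there is a relation isomorphism between the subtype S = {x : ZFSet.{u} // x is a set-theoretic ordinal} equipped with the membership relation (x ∈ y on underlying sets) and the type Ordinal.{u} equipped with its strict order <; i.e., there is a bijection S ≃ Ordinal.{u} that preserves and reflects the respective orders. -/
universe u

/-- A set-theoretic ordinal: a hereditarily transitive set, i.e. a transitive set
all of whose elements are transitive. -/
def ZFSet.IsSTOrdinal (x : ZFSet) : Prop :=
  x.IsTransitive ∧ ∀ y ∈ x, ZFSet.IsTransitive y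

/-- set-theoretic and type-theoretic ordinals coincide: the subtype of
set-theoretic ordinals in `ZFSet.{u}`, ordered by membership, is order-isomorphic to
`Ordinal.{u}` with its strict order. -/
theorem stOrdinals_iso_ordinals :
    Nonempty ((fun x y : {x : ZFSet.{u} // x.IsSTOrdinal} => x.1 ∈ y.1) ≃r
      ((· < ·) : Ordinal.{u} → Ordinal.{u} → Prop)) := by
  have key : ∀ x : ZFSet.{u}, x.IsSTOrdinal ↔ x.IsOrdinal := fun x =>
    ZFSet.isOrdinal_iff_forall_mem_isTransitive.symm
  exact ⟨{
    toFun := fun x => x.1.rank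
    invFun := fun o => ⟨o.toZFSet, (key _).2 (ZFSet.isOrdinal_toZFSet o)⟩
    left_inv := fun x => Subtype.ext ((key _).1 x.2).toZFSet_rank_eq
    right_inv := fun o => Ordinal.rank_toZFSet o
    map_rel_iff' := fun {x y} => ((key _).1 x.2).rank_lt_iff_mem ((key _).1 y.2) }⟩
end

section
/- If x : ZFSet is a set-theoretic ordinal, then its type of elements {y : ZFSet // y ∈ x}, ordered by membership of the underlying sets, is a type-theoretic ordinal: the relation is wellfounded, extensional, and transitive. -/
universe u

/-- the type of elements of a set-theoretic ordinal, ordered by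
membership, is a type-theoretic ordinal: wellfounded, extensional, and transitive. -/
theorem elements_of_stOrdinal_is_type_theoretic_ordinal (x : ZFSet.{u})
    (hx : x.IsSTOrdinal) :
    (WellFounded fun a b : {y : ZFSet.{u} // y ∈ x} => a.1 ∈ b.1) ∧
    (∀ a b : {y : ZFSet.{u} // y ∈ x},
      (∀ c : {y : ZFSet.{u} // y ∈ x}, c.1 ∈ a.1 ↔ c.1 ∈ b.1) → a = b) ∧
    (∀ a b c : {y : ZFSet.{u} // y ∈ x}, a.1 ∈ b.1 → b.1 ∈ c.1 → a.1 ∈ c.1) := by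
  refine ⟨InvImage.wf Subtype.val ZFSet.mem_wf, ?_, ?_⟩
  · intro a b h
    apply Subtype.ext
    apply ZFSet.ext
    intro z
    constructor
    · intro hz
      exact (h ⟨z, hx.1.mem_trans hz a.2⟩).1 hz
    · intro hz
      exact (h ⟨z, hx.1.mem_trans hz b.2⟩).2 hz
  · intro a b c hab hbc
    exact (hx.2 c.1 c.2).mem_trans hab hbc
end

section
/- Rank as a quotient: let A : Type u and f : A → ZFSet.{u}, and let x : ZFSet.{u} be a set-theoretic ordinal whose members are exactly the values of f (i.e., y ∈ x if and only if there exists a : A with f a = y). Consider the quotient Q of A by the equivalence relation a ~ b defined by f a = f b, with the induced relation [a] ≺ [b] defined by f a ∈ f b. Then ≺ is well-defined on Q, is wellfounded, extensional, and transitive (hence a well-order), and its order type equals ZFSet.rank x. -/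
universe u

/-- rank as a quotient: if the set-theoretic ordinal `x` has exactly the
values of `f : A → ZFSet` as members, then the relation `[a] ≺ [b] ↔ f a ∈ f b` is
well-defined on the quotient of `A` by `f a = f b`, it is wellfounded, extensional
and transitive (hence a well-order), and its order type is the rank of `x`. -/
theorem rank_as_quotient {A : Type u} (f : A → ZFSet.{u}) (x : ZFSet.{u})
    (hx : x.IsSTOrdinal) (hmem : ∀ y : ZFSet.{u}, y ∈ x ↔ ∃ a : A, f a = y) :
    ∃ R : Quotient (Setoid.ker f) → Quotient (Setoid.ker f) → Prop,
      (∀ a b : A, R (Quotient.mk (Setoid.ker f) a) (Quotient.mk (Setoid.ker f) b) ↔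
        f a ∈ f b) ∧
      WellFounded R ∧
      (∀ p q : Quotient (Setoid.ker f), (∀ t, R t p ↔ R t q) → p = q) ∧
      (∀ p q t : Quotient (Setoid.ker f), R p q → R q t → R p t) ∧
      ∃ h : IsWellOrder (Quotient (Setoid.ker f)) R,
        @Ordinal.type (Quotient (Setoid.ker f)) R h = ZFSet.rank x := by
  have hxo : x.IsOrdinal :=
    ZFSet.isOrdinal_iff_forall_mem_isTransitive.2 ⟨hx.1, fun y hy => hx.2 y hy⟩
  have hfx : ∀ a, f a ∈ x := fun a => (hmem _).2 ⟨a, rfl⟩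
  have hfo : ∀ a, (f a).IsOrdinal := fun a => hxo.mem (hfx a)
  let F : Quotient (Setoid.ker f) → ZFSet.{u} := Quotient.lift f (fun _ _ h => h)
  have hFo : ∀ p, (F p).IsOrdinal := fun p => Quotient.inductionOn p hfo
  have hFx : ∀ p, F p ∈ x := fun p => Quotient.inductionOn p hfx
  have hFinj : Function.Injective F := by
    intro p q
    induction p using Quotient.inductionOn
    induction q using Quotient.inductionOn
    exact fun h => Quotient.sound h
  let g : Quotient (Setoid.ker f) → Set.Iio x.rank :=
    fun p => ⟨(F p).rank, ZFSet.rank_lt_of_mem (hFx p)⟩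
  have hg : ∀ p q, g p < g q ↔ F p ∈ F q := fun p q =>
    ZFSet.IsOrdinal.rank_lt_iff_mem (hFo p) (hFo q)
  have hgb : Function.Bijective g := by
    constructor
    · intro p q h
      exact hFinj ((ZFSet.IsOrdinal.rank_inj (hFo p) (hFo q)).1 (congrArg Subtype.val h))
    · rintro ⟨o, ho⟩
      have h1 : o.toZFSet ∈ x := by
        rw [← ZFSet.IsOrdinal.toZFSet_rank_eq hxo]
        exact Ordinal.toZFSet_mem_toZFSet_iff.2 ho
      obtain ⟨a, ha⟩ := (hmem _).1 h1
      refine ⟨Quotient.mk _ a, Subtype.ext ?_⟩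
      change (f a).rank = o
      rw [ha, Ordinal.rank_toZFSet]
  let R : Quotient (Setoid.ker f) → Quotient (Setoid.ker f) → Prop := fun p q => F p ∈ F q
  let e : R ≃r ((· < ·) : Set.Iio x.rank → Set.Iio x.rank → Prop) :=
    ⟨Equiv.ofBijective g hgb, fun {p q} => hg p q⟩
  let e' : R ≃r ((· < ·) : x.rank.ToType → x.rank.ToType → Prop) :=
    e.trans (Ordinal.ToType.mk (o := x.rank)).toRelIsoLT
  have hwo : IsWellOrder _ R := e'.toRelEmbedding.isWellOrder
  have htr : ∀ p q t, R p q → R q t → R p t := fun p q t h1 h2 =>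
    (hFo t).mem_trans h1 h2
  refine ⟨R, fun a b => Iff.rfl, hwo.wf, ?_, htr, hwo, ?_⟩
  · intro p q h
    rcases (hFo p).mem_trichotomous (hFo q) with h1 | h1 | h1
    · exact absurd ((h p).2 h1) (ZFSet.mem_irrefl _)
    · exact hFinj h1
    · exact absurd ((h q).1 h1) (ZFSet.mem_irrefl _)
  · exact (Ordinal.type_eq.2 ⟨e'⟩).trans (Ordinal.type_toType _)
end

section
/- The rank of a set-theoretic ordinal is the order type of its membership order: if x : ZFSet.{u} is a set-theoretic ordinal, then the membership relation on the subtype {y : ZFSet.{u} // y ∈ x} is a well-order whose order type (an ordinal in universe u+1) equals the universe lift Ordinal.lift.{u+1} (ZFSet.rank x) of the rank of x. -/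
universe u

/-- the membership order on the type of elements of a set-theoretic
ordinal `x` is a well-order whose order type is the lift of the rank of `x`. -/
theorem type_mem_elements_eq_lift_rank (x : ZFSet.{u}) (hx : x.IsSTOrdinal) :
    ∃ h : IsWellOrder {y : ZFSet.{u} // y ∈ x} (fun a b => a.1 ∈ b.1),
      @Ordinal.type {y : ZFSet.{u} // y ∈ x} (fun a b => a.1 ∈ b.1) h =
        Ordinal.lift.{u+1} (ZFSet.rank x) := by
  have ho : x.IsOrdinal := ZFSet.isOrdinal_iff_forall_mem_isTransitive.2 hx
  have h : IsWellOrder {y : ZFSet.{u} // y ∈ x} (fun a b => a.1 ∈ b.1) := ho.isWellOrder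
  refine ⟨h, ?_⟩
  rw [← Ordinal.type_lt_Iio]
  refine Ordinal.type_eq.2 ⟨⟨⟨fun y => ⟨y.1.rank, ZFSet.rank_lt_of_mem y.2⟩,
    fun o => ⟨o.1.toZFSet, ?_⟩, fun y => Subtype.ext (ho.mem y.2).toZFSet_rank_eq,
    fun o => Subtype.ext (Ordinal.rank_toZFSet o.1)⟩, ?_⟩⟩
  · have hm := Ordinal.toZFSet_mem_toZFSet_iff.2 (Set.mem_Iio.1 o.2)
    rwa [ho.toZFSet_rank_eq] at hm
  · intro a b
    exact ZFSet.IsOrdinal.rank_lt_iff_mem (ho.mem a.2) (ho.mem b.2)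
end

section
/- For a mewo (X, <, m), the map sending x to the initial segment X ↓⁺ x is injective: if x₁, x₂ : X and there is an isomorphism of mewos between X ↓⁺ x₁ and X ↓⁺ x₂ — that is, a bijection e : {y | y <⁺ x₁} ≃ {y | y <⁺ x₂} with (y < z ↔ e y < e z) and (y < x₁ ↔ e y < x₂) for all y, z — then x₁ = x₂. -/
universe u

/-- A marked extensional wellfounded order (mewo): a type equipped with a wellfounded,
extensional binary relation together with a marking predicate. -/
structure Mewo : Type (u + 1) where
  carrier : Type u
  lt : carrier → carrier → Prop
  wf : WellFounded lt
  ext : ∀ x y : carrier, (∀ z : carrier, lt z x ↔ lt z y) → x = y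
  marked : carrier → Prop

namespace Mewo

/-- An element is covered if some marked element lies reflexive-transitively above it. -/
def Covered (M : Mewo.{u}) : Prop :=
  ∀ x : M.carrier, ∃ x₀ : M.carrier, M.marked x₀ ∧ Relation.ReflTransGen M.lt x x₀

/-- The initial segment `M ↓⁺ x`: carrier is the elements transitively below `x`, with
the restricted order; the marked elements are the immediate predecessors of `x`. -/
def seg (M : Mewo.{u}) (x : M.carrier) : Mewo.{u} where
  carrier := { y : M.carrier // Relation.TransGen M.lt y x }
  lt a b := M.lt a.1 b.1
  wf := by
    have h := InvImage.wf
      (fun a : { y : M.carrier // Relation.TransGen M.lt y x } => a.1) M.wf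
    exact h
  ext := by
    rintro ⟨a, ha⟩ ⟨b, hb⟩ h
    apply Subtype.ext
    apply M.ext
    intro z
    constructor
    · intro hz
      exact (h ⟨z, Relation.TransGen.head hz ha⟩).mp hz
    · intro hz
      exact (h ⟨z, Relation.TransGen.head hz hb⟩).mpr hz
  marked a := M.lt a.1 x

end Mewo

/-- An isomorphism of mewos: a bijection preserving and reflecting order and marking. -/
structure MewoIso (M : Mewo.{u}) (N : Mewo.{u}) where
  toEquiv : M.carrier ≃ N.carrier
  lt_iff : ∀ x y : M.carrier, M.lt x y ↔ N.lt (toEquiv x) (toEquiv y)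
  marked_iff : ∀ x : M.carrier, M.marked x ↔ N.marked (toEquiv x)

/-- `f` is a simulation from `M` to `N`: it preserves markings, is monotone, and has
the initial-segment property. -/
def IsSimulation (M N : Mewo.{u}) (f : M.carrier → N.carrier) : Prop :=
  (∀ x : M.carrier, M.marked x → N.marked (f x)) ∧
  (∀ x y : M.carrier, M.lt x y → N.lt (f x) (f y)) ∧
  (∀ (x : M.carrier) (y : N.carrier), N.lt y (f x) → ∃ x' : M.carrier, M.lt x' x ∧ f x' = y)

/-- A bounded simulation `M < N`: a marked element `y : N` together with an isomorphism
of mewos between `M` and the initial segment `N ↓⁺ y`. -/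
def BoundedSim (M N : Mewo.{u}) : Prop :=
  ∃ y : N.carrier, N.marked y ∧ Nonempty (MewoIso M (N.seg y))

/-- the map sending `x` to the initial segment `M ↓⁺ x` is injective:
an isomorphism of mewos between `M ↓⁺ x₁` and `M ↓⁺ x₂` forces `x₁ = x₂`. -/
theorem Mewo.seg_injective (M : Mewo.{u}) (x₁ x₂ : M.carrier)
    (e : MewoIso (M.seg x₁) (M.seg x₂)) : x₁ = x₂ := by
  have key : ∀ a : M.carrier, ∀ ha : Relation.TransGen M.lt a x₁,
      (e.toEquiv ⟨a, ha⟩).1 = a := by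
    intro a
    induction a using M.wf.induction with
    | _ a ih =>
      intro ha
      apply M.ext
      intro z
      constructor
      · intro hz
        have hz2 : Relation.TransGen M.lt z x₂ :=
          Relation.TransGen.head hz (e.toEquiv ⟨a, ha⟩).2
        obtain ⟨⟨w, hw⟩, hwz⟩ := e.toEquiv.surjective ⟨z, hz2⟩
        have hlt : M.lt w a := by
          refine (e.lt_iff ⟨w, hw⟩ ⟨a, ha⟩).mpr ?_
          rw [hwz]
          exact hz
        have h := ih w hlt hw
        rw [hwz] at h
        have h' : z = w := h
        rw [h']
        exact hlt
      · intro hz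
        have hz1 : Relation.TransGen M.lt z x₁ := Relation.TransGen.head hz ha
        have h : M.lt (e.toEquiv ⟨z, hz1⟩).1 (e.toEquiv ⟨a, ha⟩).1 :=
          (e.lt_iff ⟨z, hz1⟩ ⟨a, ha⟩).mp hz
        rwa [ih z hz hz1] at h
  apply M.ext
  intro z
  constructor
  · intro hz
    have hz1 : Relation.TransGen M.lt z x₁ := Relation.TransGen.single hz
    have h : M.lt (e.toEquiv ⟨z, hz1⟩).1 x₂ := (e.marked_iff ⟨z, hz1⟩).mp hz
    rwa [key z hz1] at h
  · intro hz
    obtain ⟨⟨w, hw⟩, hwz⟩ := e.toEquiv.surjective ⟨z, Relation.TransGen.single hz⟩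
    have hlt : M.lt w x₁ := by
      refine (e.marked_iff ⟨w, hw⟩).mpr ?_
      rw [hwz]
      exact hz
    have h := key w hw
    rw [hwz] at h
    have h' : z = w := h
    rw [h']
    exact hlt
end

section
/- Let (X, <, m_X) and (Y, <, m_Y) be mewos and let f : X → Y be a function that preserves markings (m_X x implies m_Y (f x)). Then the following are equivalent: (i) f is a simulation; (ii) for every x : X there is an isomorphism of mewos between the initial segments X ↓⁺ x and Y ↓⁺ (f x). -/
universe u

theorem sim_inj (M N : Mewo.{u}) (f : M.carrier → N.carrier)
    (h : IsSimulation M N f) : ∀ x y : M.carrier, f x = f y → x = y := by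
  obtain ⟨-, hm, hi⟩ := h
  intro x
  induction x using M.wf.induction with
  | _ x ih =>
    intro y hxy
    apply M.ext
    intro z
    constructor
    · intro hz
      have h1 := hm z x hz
      rw [hxy] at h1
      obtain ⟨w, hw, e⟩ := hi y _ h1
      rw [ih z hz w e.symm]
      exact hw
    · intro hz
      have h1 := hm z y hz
      rw [← hxy] at h1
      obtain ⟨w, hw, e⟩ := hi x _ h1
      rw [← ih w hw z e]
      exact hw

theorem iso_val (M N : Mewo.{u}) (f : M.carrier → N.carrier)
    (φ : ∀ x : M.carrier, MewoIso (M.seg x) (N.seg (f x))) :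
    ∀ (w x : M.carrier) (h : Relation.TransGen M.lt w x),
      ((φ x).toEquiv ⟨w, h⟩).1 = f w := by
  intro w
  induction w using M.wf.induction with
  | _ w ih =>
    intro x h
    apply N.ext
    intro z
    constructor
    · intro hz
      obtain ⟨⟨v, hv⟩, e⟩ := (φ x).toEquiv.surjective
        ⟨z, Relation.TransGen.head hz ((φ x).toEquiv ⟨w, h⟩).2⟩
      have hvw : M.lt v w := by
        apply ((φ x).lt_iff ⟨v, hv⟩ ⟨w, h⟩).mpr
        rw [e]
        exact hz
      have e1 := ih v hvw x hv
      rw [e] at e1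
      have e2 := ih v hvw w (.single hvw)
      have h3 : N.lt ((φ w).toEquiv ⟨v, .single hvw⟩).1 (f w) :=
        ((φ w).marked_iff ⟨v, .single hvw⟩).mp hvw
      rw [e2, ← e1] at h3
      exact h3
    · intro hz
      obtain ⟨⟨v, hv⟩, e⟩ := (φ w).toEquiv.surjective ⟨z, .single hz⟩
      have hvw : M.lt v w := by
        apply ((φ w).marked_iff ⟨v, hv⟩).mpr
        rw [e]
        exact hz
      have e1 := ih v hvw w hv
      rw [e] at e1
      have e2 := ih v hvw x (.head hvw h)
      have h3 : N.lt ((φ x).toEquiv ⟨v, .head hvw h⟩).1 ((φ x).toEquiv ⟨w, h⟩).1 :=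
        ((φ x).lt_iff ⟨v, .head hvw h⟩ ⟨w, h⟩).mp hvw
      rw [e2, ← e1] at h3
      exact h3

/-- a marking-preserving function is a simulation iff it preserves
initial segments up to isomorphism of mewos. -/
theorem isSimulation_iff_seg_iso (M N : Mewo.{u}) (f : M.carrier → N.carrier)
    (hf : ∀ x : M.carrier, M.marked x → N.marked (f x)) :
    IsSimulation M N f ↔ ∀ x : M.carrier, Nonempty (MewoIso (M.seg x) (N.seg (f x))) := by
  constructor
  · intro h
    have inj := sim_inj M N f h
    obtain ⟨-, hm, hi⟩ := h
    have refl : ∀ a b, N.lt (f a) (f b) → M.lt a b := by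
      intro a b hab
      obtain ⟨w, hw, e⟩ := hi b _ hab
      rw [← inj w a e]
      exact hw
    intro x
    have surj : ∀ y, Relation.TransGen N.lt y (f x) →
        ∃ w, Relation.TransGen M.lt w x ∧ f w = y := by
      intro y hy
      induction hy using Relation.TransGen.head_induction_on with
      | single hy =>
        obtain ⟨w, hw, e⟩ := hi x _ hy
        exact ⟨w, .single hw, e⟩
      | head hy _ ih =>
        obtain ⟨v, hv, rfl⟩ := ih
        obtain ⟨w, hw, e⟩ := hi v _ hy
        exact ⟨w, .head hw hv, e⟩
    let g : (M.seg x).carrier → (N.seg (f x)).carrier :=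
      fun a => ⟨f a.1, Relation.TransGen.lift f hm _ _ a.2⟩
    have hg : Function.Bijective g := by
      constructor
      · intro a b hab
        exact Subtype.ext (inj _ _ (congrArg Subtype.val hab))
      · rintro ⟨y, hy⟩
        obtain ⟨w, hw, e⟩ := surj y hy
        exact ⟨⟨w, hw⟩, Subtype.ext e⟩
    exact ⟨⟨Equiv.ofBijective g hg, fun a b => ⟨hm a.1 b.1, refl a.1 b.1⟩,
      fun a => ⟨hm a.1 x, refl a.1 x⟩⟩⟩
  · intro h
    have φ := fun x => (h x).some
    have key := iso_val M N f φ
    refine ⟨hf, ?_, ?_⟩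
    · intro a b hab
      rw [← key a b (.single hab)]
      exact ((φ b).marked_iff ⟨a, .single hab⟩).mp hab
    · intro x y hy
      obtain ⟨⟨v, hv⟩, e⟩ := (φ x).toEquiv.surjective ⟨y, .single hy⟩
      refine ⟨v, ?_, ?_⟩
      · apply ((φ x).marked_iff ⟨v, hv⟩).mpr
        rw [e]
        exact hy
      · rw [← key v x hv, e]
end

section
/- The covered mewos, ordered by bounded simulation, form an extensional wellfounded order: (a) the relation 'there exists a bounded simulation X < Y' is wellfounded on the type of covered mewos with carrier in a fixed universe u; (b) if X and Y are covered mewos such that for every covered mewo Z (with carrier in universe u) there is a bounded simulation Z < X if and only if there is a bounded simulation Z < Y, then X and Y are isomorphic as mewos. -/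
universe u

namespace Mewo

/-- Mostowski collapse of an element. -/
noncomputable def col (M : Mewo.{u}) : M.carrier → ZFSet.{u} :=
  M.wf.fix (fun x ih => ZFSet.range (fun y : { y : M.carrier // M.lt y x } => ih y.1 y.2))

theorem mem_col (M : Mewo.{u}) (x : M.carrier) (z : ZFSet.{u}) :
    z ∈ M.col x ↔ ∃ y, M.lt y x ∧ M.col y = z := by
  rw [col, WellFounded.fix_eq, ZFSet.mem_range]
  constructor
  · rintro ⟨⟨y, hy⟩, h⟩
    exact ⟨y, hy, h⟩
  · rintro ⟨y, hy, h⟩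
    exact ⟨⟨y, hy⟩, h⟩

theorem col_inj (M : Mewo.{u}) : ∀ x y : M.carrier, M.col x = M.col y → x = y := by
  intro x
  induction x using M.wf.induction with
  | _ x ih =>
    intro y h
    apply M.ext
    intro z
    constructor
    · intro hz
      have h1 : M.col z ∈ M.col y := h ▸ (M.mem_col x _).2 ⟨z, hz, rfl⟩
      obtain ⟨w, hw, e⟩ := (M.mem_col y _).1 h1
      rw [ih z hz w e.symm]
      exact hw
    · intro hz
      have h1 : M.col z ∈ M.col x := h ▸ (M.mem_col y _).2 ⟨z, hz, rfl⟩
      obtain ⟨w, hw, e⟩ := (M.mem_col x _).1 h1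
      rw [← ih w hw z e]
      exact hw

theorem lt_iff_col (M : Mewo.{u}) (x y : M.carrier) : M.lt x y ↔ M.col x ∈ M.col y := by
  rw [mem_col]
  constructor
  · intro h
    exact ⟨x, h, rfl⟩
  · rintro ⟨w, hw, e⟩
    rw [← M.col_inj _ _ e]
    exact hw

/-- The set of collapses of marked elements. -/
noncomputable def Col (M : Mewo.{u}) : ZFSet.{u} :=
  ZFSet.range (fun y : { y : M.carrier // M.marked y } => M.col y.1)

theorem mem_Col (M : Mewo.{u}) (z : ZFSet.{u}) :
    z ∈ M.Col ↔ ∃ y, M.marked y ∧ M.col y = z := by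
  rw [Col, ZFSet.mem_range]
  constructor
  · rintro ⟨⟨y, hy⟩, h⟩
    exact ⟨y, hy, h⟩
  · rintro ⟨y, hy, h⟩
    exact ⟨⟨y, hy⟩, h⟩

theorem marked_iff_col (M : Mewo.{u}) (x : M.carrier) : M.marked x ↔ M.col x ∈ M.Col := by
  rw [mem_Col]
  constructor
  · intro h
    exact ⟨x, h, rfl⟩
  · rintro ⟨w, hw, e⟩
    rw [← M.col_inj _ _ e]
    exact hw

theorem col_map (M N : Mewo.{u}) (f : M.carrier → N.carrier)
    (h1 : ∀ x y, M.lt x y → N.lt (f x) (f y))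
    (h2 : ∀ x y, N.lt y (f x) → ∃ x', M.lt x' x ∧ f x' = y) :
    ∀ x, N.col (f x) = M.col x := by
  intro x
  induction x using M.wf.induction with
  | _ x ih =>
    ext z
    rw [mem_col, mem_col]
    constructor
    · rintro ⟨y, hy, rfl⟩
      obtain ⟨x', hx', rfl⟩ := h2 x y hy
      exact ⟨x', hx', (ih x' hx').symm⟩
    · rintro ⟨y, hy, rfl⟩
      exact ⟨f y, h1 _ _ hy, ih y hy⟩

theorem col_seg (M : Mewo.{u}) (x : M.carrier) (a : (M.seg x).carrier) :
    M.col a.1 = (M.seg x).col a :=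
  col_map (M.seg x) M (fun a => a.1) (fun _ _ h => h)
    (fun b y h => ⟨⟨y, Relation.TransGen.head h b.2⟩, h, rfl⟩) a

theorem Col_seg (M : Mewo.{u}) (x : M.carrier) : (M.seg x).Col = M.col x := by
  ext z
  rw [mem_Col, mem_col]
  constructor
  · rintro ⟨y, hy, rfl⟩
    exact ⟨y.1, hy, M.col_seg x y⟩
  · rintro ⟨y, hy, rfl⟩
    exact ⟨⟨y, .single hy⟩, hy, (M.col_seg x ⟨y, .single hy⟩).symm⟩

theorem Col_iso {M N : Mewo.{u}} (e : MewoIso M N) : M.Col = N.Col := by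
  have h := col_map M N e.toEquiv (fun x y => (e.lt_iff x y).1) (by
    intro x y hy
    refine ⟨e.toEquiv.symm y, ?_, by simp⟩
    rw [e.lt_iff]
    simpa using hy)
  ext z
  rw [mem_Col, mem_Col]
  constructor
  · rintro ⟨y, hy, rfl⟩
    exact ⟨e.toEquiv y, (e.marked_iff y).1 hy, h y⟩
  · rintro ⟨y, hy, rfl⟩
    refine ⟨e.toEquiv.symm y, ?_, ?_⟩
    · rw [e.marked_iff]
      simpa using hy
    · rw [← h]
      simp

theorem Col_mem {M N : Mewo.{u}} (h : BoundedSim M N) : M.Col ∈ N.Col := by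
  obtain ⟨y, hy, ⟨e⟩⟩ := h
  rw [Col_iso e, Col_seg]
  exact (N.marked_iff_col y).1 hy

theorem seg_covered (M : Mewo.{u}) (x : M.carrier) : (M.seg x).Covered := by
  rintro ⟨y, hy⟩
  induction hy using Relation.TransGen.head_induction_on with
  | single h => exact ⟨⟨_, .single h⟩, h, .refl⟩
  | head h h' ih =>
    obtain ⟨x₀, hm, hx⟩ := ih
    exact ⟨x₀, hm, .head (show (M.seg x).lt ⟨_, .head h h'⟩ ⟨_, h'⟩ from h) hx⟩

theorem exists_col {M N : Mewo.{u}} (hM : M.Covered) (h : M.Col = N.Col) (x : M.carrier) :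
    ∃ y, N.col y = M.col x := by
  obtain ⟨x₀, hm, hx⟩ := hM x
  induction hx using Relation.ReflTransGen.head_induction_on with
  | refl =>
    have h1 := (M.marked_iff_col x₀).1 hm
    rw [h, mem_Col] at h1
    obtain ⟨y, _, hy⟩ := h1
    exact ⟨y, hy⟩
  | head h1 _ ih =>
    obtain ⟨y, hy⟩ := ih
    have h2 := (M.lt_iff_col _ _).1 h1
    rw [← hy, mem_col] at h2
    obtain ⟨w, _, hw⟩ := h2
    exact ⟨w, hw⟩

theorem iso_of_Col {M N : Mewo.{u}} (hM : M.Covered) (hN : N.Covered) (h : M.Col = N.Col) :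
    Nonempty (MewoIso M N) := by
  choose f hf using exists_col hM h
  choose g hg using exists_col hN h.symm
  refine ⟨⟨⟨f, g, ?_, ?_⟩, ?_, ?_⟩⟩
  · intro x
    apply M.col_inj
    rw [hg, hf]
  · intro x
    apply N.col_inj
    rw [hf, hg]
  · intro x y
    change _ ↔ N.lt (f x) (f y)
    rw [lt_iff_col, lt_iff_col, hf, hf]
  · intro x
    change _ ↔ N.marked (f x)
    rw [marked_iff_col, marked_iff_col, hf, h]

theorem Col_sub {X Y : Mewo.{u}}
    (h : ∀ Z : { M : Mewo.{u} // M.Covered }, BoundedSim Z.1 X → BoundedSim Z.1 Y)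
    {z : ZFSet.{u}} (hz : z ∈ X.Col) : z ∈ Y.Col := by
  obtain ⟨x, hx, rfl⟩ := (X.mem_Col z).1 hz
  rw [← Col_seg]
  exact Col_mem (h ⟨X.seg x, X.seg_covered x⟩
    ⟨x, hx, ⟨⟨Equiv.refl _, fun _ _ => Iff.rfl, fun _ => Iff.rfl⟩⟩⟩)

end Mewo

/-- the covered mewos, ordered by bounded simulation, form an extensional
wellfounded order. -/
theorem coveredMewo_boundedSim_wellFounded_and_extensional :
    (WellFounded fun X Y : { M : Mewo.{u} // M.Covered } => BoundedSim X.1 Y.1) ∧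
    (∀ X Y : { M : Mewo.{u} // M.Covered },
      (∀ Z : { M : Mewo.{u} // M.Covered }, BoundedSim Z.1 X.1 ↔ BoundedSim Z.1 Y.1) →
      Nonempty (MewoIso X.1 Y.1)) := by
  refine ⟨?_, ?_⟩
  · refine Subrelation.wf (r := InvImage (· ∈ ·)
      (fun X : { M : Mewo.{u} // M.Covered } => X.1.Col)) ?_ (InvImage.wf _ ZFSet.mem_wf)
    intro X Y h
    exact Mewo.Col_mem h
  · intro X Y h
    apply Mewo.iso_of_Col X.2 Y.2
    ext z
    exact ⟨Mewo.Col_sub fun Z => (h Z).1, Mewo.Col_sub fun Z => (h Z).2⟩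
end
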